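/- arXiv:1907.04371 — 7 statements merged into one kernel-verified Lean document; each statement's English description precedes it below -/
import Mathlib

section
/- Let n, s, q be integers with 1 ≤ q ≤ s ≤ n, let E be a real vector space, and let v : {1,…,n} → E. For each subset S ⊆ {1,…,n} with |S| = s, let Q(S) denote the set of the q smallest elements of S. Then ∑_{S ⊆ {1,…,n}, |S| = s} ∑_{i ∈ Q(S)} v_i = ∑_{j=1}^{n} ( ∑_{l=0}^{q-1} C(j-1, l)·C(n-j, s-l-1) ) · v_j. (This is the combinatorial core of Theorem 1: after relabeling indices so that the losses are nonincreasing, the top-q subsample average is an unbiased estimator of the γ-weighted ordered sum.) -/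
/-!
An element of `S` is among its `q` smallest exactly when fewer than `q` elements of `S` lie below
it. Exchanging the order of summation, the coefficient of `v j` is the number of `s`-subsets `S`
containing `j` with at most `q - 1` elements below `j`. If exactly `l` elements of `S` lie below
`j`, then `S` consists of `j`, of `l` elements chosen below `j`, and of `s - l - 1` elements chosen
above `j`.
-/

section

open Finset

variable {α : Type*} [LinearOrder α]

/-- The rank of `i` relative to `S`, counted from `0`: the number of elements of `S` strictly below
`i`. It is defined whether or not `i` belongs to `S`, so that the rank of `j` in the ground set and
in a subset can be compared. -/
def rankIn (S : Finset α) (i : α) : ℕ := #{x ∈ S | x < i}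

lemma insert_filter_lt_union_filter_gt {S : Finset α} {j : α} (hj : j ∈ S) :
    insert j ({x ∈ S | x < j} ∪ {x ∈ S | j < x}) = S := by
  ext x
  have := lt_trichotomy x j
  grind

lemma card_eq_rankIn_add_card_filter_gt_add_one {S : Finset α} {j : α} (hj : j ∈ S) :
    #S = rankIn S j + #{x ∈ S | j < x} + 1 := by
  have hdisj : Disjoint {x ∈ S | x < j} {x ∈ S | j < x} :=
    disjoint_filter.2 fun _ _ => lt_asymm
  conv_lhs => rw [← insert_filter_lt_union_filter_gt hj]
  rw [card_insert_of_notMem (by simp), card_union_of_disjoint hdisj, rankIn]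

lemma filter_lt_insert_union {A B : Finset α} {j : α}
    (hA : ∀ x ∈ A, x < j) (hB : ∀ x ∈ B, j < x) :
    {x ∈ insert j (A ∪ B) | x < j} = A := by
  grind

lemma filter_gt_insert_union {A B : Finset α} {j : α}
    (hA : ∀ x ∈ A, x < j) (hB : ∀ x ∈ B, j < x) :
    {x ∈ insert j (A ∪ B) | j < x} = B := by
  grind

lemma card_filter_powersetCard_rankIn_eq {U : Finset α} {j : α} (hj : j ∈ U) (l m : ℕ) :
    #{S ∈ powersetCard (l + m + 1) U | j ∈ S ∧ rankIn S j = l} =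
      (rankIn U j).choose l * (#{x ∈ U | j < x}).choose m := by
  rw [rankIn, ← card_powersetCard, ← card_powersetCard, ← card_product]
  have hparts : ∀ p ∈ powersetCard l {x ∈ U | x < j} ×ˢ powersetCard m {x ∈ U | j < x},
      {x ∈ insert j (p.1 ∪ p.2) | x < j} = p.1 ∧ {x ∈ insert j (p.1 ∪ p.2) | j < x} = p.2 := by
    intro p hp
    simp only [mem_product, mem_powersetCard] at hp
    have hbelow : ∀ x ∈ p.1, x < j := fun x hx => (mem_filter.1 (hp.1.1 hx)).2
    have habove : ∀ x ∈ p.2, j < x := fun x hx => (mem_filter.1 (hp.2.1 hx)).2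
    exact ⟨filter_lt_insert_union hbelow habove, filter_gt_insert_union hbelow habove⟩
  refine card_nbij' (fun S => ({x ∈ S | x < j}, {x ∈ S | j < x}))
    (fun p => insert j (p.1 ∪ p.2)) ?mapsTo ?mapsTo_inv
    (fun S hS => insert_filter_lt_union_filter_gt (mem_filter.1 hS).2.1)
    (fun p hp => Prod.ext (hparts p hp).1 (hparts p hp).2)
  case mapsTo =>
    intro S hS
    simp only [mem_coe, mem_filter, mem_powersetCard] at hS
    obtain ⟨⟨hSU, hcard⟩, hjS, hrank⟩ := hS
    have hsplit := card_eq_rankIn_add_card_filter_gt_add_one hjS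
    simp only [mem_coe, mem_product, mem_powersetCard]
    exact ⟨⟨filter_subset_filter _ hSU, hrank⟩, filter_subset_filter _ hSU, by omega⟩
  case mapsTo_inv =>
    rintro ⟨A, B⟩ hAB
    obtain ⟨hlt, hgt⟩ := hparts _ hAB
    simp only [mem_coe, mem_product, mem_powersetCard] at hAB hlt hgt
    obtain ⟨⟨hA, hAcard⟩, hB, hBcard⟩ := hAB
    have hmem : j ∈ insert j (A ∪ B) := mem_insert_self _ _
    have hrank : rankIn (insert j (A ∪ B)) j = l := by rw [rankIn, hlt, hAcard]
    have hsub : insert j (A ∪ B) ⊆ U := insert_subset hj <|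
      union_subset (hA.trans (filter_subset _ _)) (hB.trans (filter_subset _ _))
    have hcard : #(insert j (A ∪ B)) = l + m + 1 := by
      rw [card_eq_rankIn_add_card_filter_gt_add_one hmem, hrank, hgt, hBcard]
    exact mem_filter.2 ⟨mem_powersetCard.2 ⟨hsub, hcard⟩, hmem, hrank⟩

lemma card_filter_powersetCard_rankIn_lt {U : Finset α} {j : α} (hj : j ∈ U) {s q : ℕ}
    (hqs : q ≤ s) :
    #{S ∈ powersetCard s U | j ∈ S ∧ rankIn S j < q} =
      ∑ l ∈ range q, (rankIn U j).choose l * (#{x ∈ U | j < x}).choose (s - l - 1) := by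
  rw [card_eq_sum_card_fiberwise (f := (rankIn · j)) (t := range q)
    fun S hS => mem_coe.2 (mem_range.2 (mem_filter.1 hS).2.2)]
  refine sum_congr rfl fun l hl => ?_
  have hlq : l < q := mem_range.1 hl
  rw [← card_filter_powersetCard_rankIn_eq hj, show l + (s - l - 1) + 1 = s by omega, filter_filter]
  congr 1
  exact filter_congr fun S _ => by grind

lemma mem_iff_rankIn_lt_card {S Q : Finset α} (hQS : Q ⊆ S)
    (hlt : ∀ i ∈ Q, ∀ j ∈ S \ Q, i < j) {i : α} (hi : i ∈ S) :
    i ∈ Q ↔ rankIn S i < #Q := by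
  constructor
  · intro hiQ
    have hsub : {x ∈ S | x < i} ⊆ Q := fun x hx => by
      obtain ⟨hxS, hxi⟩ := mem_filter.1 hx
      by_contra hxQ
      exact hxi.asymm (hlt i hiQ x (mem_sdiff.2 ⟨hxS, hxQ⟩))
    exact card_lt_card ((ssubset_iff_of_subset hsub).2 ⟨i, hiQ, by simp⟩)
  · contrapose!
    intro hiQ
    exact card_le_card fun x hx =>
      mem_filter.2 ⟨hQS hx, hlt x hx i (mem_sdiff.2 ⟨hi, hiQ⟩)⟩

theorem stmt_0_general {E : Type*} [AddCommMonoid E] (U : Finset α) {s q : ℕ} (hqs : q ≤ s)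
    (v : α → E) (Q : Finset α → Finset α)
    (hQ : ∀ S ∈ powersetCard s U, Q S ⊆ S ∧ #(Q S) = q ∧ ∀ i ∈ Q S, ∀ j ∈ S \ Q S, i < j) :
    ∑ S ∈ powersetCard s U, ∑ i ∈ Q S, v i =
      ∑ j ∈ U, (∑ l ∈ range q,
        (rankIn U j).choose l * (#{x ∈ U | j < x}).choose (s - l - 1)) • v j := by
  have hmem : ∀ S i, S ∈ powersetCard s U ∧ i ∈ Q S ↔
      S ∈ {S ∈ powersetCard s U | i ∈ S ∧ rankIn S i < q} ∧ i ∈ U := by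
    intro S i
    rw [mem_filter, and_assoc]
    refine and_congr_right fun hS => ?_
    obtain ⟨hQS, hcard, hlt⟩ := hQ S hS
    have hSU := (mem_powersetCard.1 hS).1
    have hrank := fun hi : i ∈ S => mem_iff_rankIn_lt_card hQS hlt hi
    grind
  calc ∑ S ∈ powersetCard s U, ∑ i ∈ Q S, v i
      = ∑ j ∈ U, ∑ S ∈ powersetCard s U with j ∈ S ∧ rankIn S j < q, v j := sum_comm' hmem
    _ = ∑ j ∈ U, #{S ∈ powersetCard s U | j ∈ S ∧ rankIn S j < q} • v j := by
      simp only [sum_const]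
    _ = _ := sum_congr rfl fun j hj => by rw [card_filter_powersetCard_rankIn_lt hj hqs]

lemma rankIn_Icc_one {n j : ℕ} (hj : j ≤ n) : rankIn (Icc 1 n) j = j - 1 := by
  have : {x ∈ Icc 1 n | x < j} = Ico 1 j := by grind
  rw [rankIn, this, Nat.card_Ico]

lemma card_filter_gt_Icc_one (n j : ℕ) : #{x ∈ Icc 1 n | j < x} = n - j := by
  have : {x ∈ Icc 1 n | j < x} = Ioc j n := by grind
  rw [this, Nat.card_Ioc]

end

/-- Combinatorial core of Theorem 1 (ordered SGD): summing, over all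
`s`-element subsets `S` of `{1,…,n}`, the vectors attached to the `q` smallest elements of `S`,
yields the `γ`-weighted sum `∑_j (∑_{l<q} C(j-1,l)·C(n-j,s-l-1)) • v j`. -/
theorem stmt_0 (n s q : ℕ) (hq : 1 ≤ q) (hqs : q ≤ s) (hsn : s ≤ n)
    (E : Type*) [AddCommGroup E] [Module ℝ E] (v : ℕ → E)
    (Q : Finset ℕ → Finset ℕ)
    (hQ : ∀ S ∈ Finset.powersetCard s (Finset.Icc 1 n),
      Q S ⊆ S ∧ (Q S).card = q ∧ ∀ i ∈ Q S, ∀ j ∈ S \ Q S, i < j) :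
    ∑ S ∈ Finset.powersetCard s (Finset.Icc 1 n), ∑ i ∈ Q S, v i
      = ∑ j ∈ Finset.Icc 1 n,
          (∑ l ∈ Finset.range q, Nat.choose (j - 1) l * Nat.choose (n - j) (s - l - 1)) • v j := by
  rw [stmt_0_general (Finset.Icc 1 n) hqs v Q hQ]
  refine Finset.sum_congr rfl fun j hj => ?_
  rw [rankIn_Icc_one (Finset.mem_Icc.1 hj).2, card_filter_gt_Icc_one]
end

section
/- Let n, s, q be integers with 1 ≤ q ≤ s ≤ n. The sequence (γ_j)_{j=1}^{n} is nonincreasing in j; equivalently, for every integer j with 1 ≤ j ≤ n-1, ∑_{l=0}^{q-1} C(j, l)·C(n-j-1, s-l-1) ≤ ∑_{l=0}^{q-1} C(j-1, l)·C(n-j, s-l-1). -/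
/-!
For `q ≤ k + 1`, the sum over `l < q` of `C(a, l) * C(b, k - l)` counts the `k`-subsets of an
`(a + b)`-set that have fewer than `q` elements in a fixed block of size `a`. Moving one more
element into this block can only lower the count. To make the loss explicit, apply Pascal's rule to
`C(a + 1, l)`, shift the index in its second half, and apply Pascal's rule backwards to the other
factor: all terms but the last turn into `C(a, l) * C(b + 1, k - l)`, and the last one is
`C(a, q - 1) * C(b, k - (q - 1))`, which is at most `C(a, q - 1) * C(b + 1, k - (q - 1))`.
-/

open Finset

theorem sum_range_succ_choose_succ_nsmul {M : Type*} [AddCommMonoid M] (f : ℕ → M) (a q : ℕ) :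
    ∑ l ∈ range (q + 1), (a + 1).choose l • f l =
      ∑ l ∈ range (q + 1), a.choose l • f l + ∑ l ∈ range q, a.choose l • f (l + 1) := by
  simp only [sum_range_succ' _ q, Nat.choose_succ_succ', Nat.choose_zero_right, add_nsmul,
    sum_add_distrib]
  abel

theorem choose_succ_sub_of_lt (b : ℕ) {k l : ℕ} (hl : l < k) :
    (b + 1).choose (k - l) = b.choose (k - l) + b.choose (k - (l + 1)) := by
  obtain ⟨d, rfl⟩ := Nat.exists_eq_add_of_lt hl
  rw [Nat.add_sub_add_right, add_assoc, Nat.add_sub_cancel_left, Nat.add_sub_cancel_left,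
    Nat.choose_succ_succ', add_comm]

theorem sum_range_succ_choose_succ_mul_choose (a b : ℕ) {k q : ℕ} (hq : q ≤ k) :
    ∑ l ∈ range (q + 1), (a + 1).choose l * b.choose (k - l) =
      ∑ l ∈ range q, a.choose l * (b + 1).choose (k - l) + a.choose q * b.choose (k - q) := by
  have pascal_right : ∑ l ∈ range q, a.choose l * (b + 1).choose (k - l) =
      ∑ l ∈ range q, a.choose l * b.choose (k - l) +
        ∑ l ∈ range q, a.choose l * b.choose (k - (l + 1)) := by
    rw [← sum_add_distrib]
    refine sum_congr rfl fun l hl ↦ ?_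
    rw [choose_succ_sub_of_lt b ((mem_range.mp hl).trans_le hq), mul_add]
  have pascal_left := sum_range_succ_choose_succ_nsmul (fun l ↦ b.choose (k - l)) a q
  simp only [smul_eq_mul] at pascal_left
  rw [pascal_left, pascal_right, sum_range_succ, add_right_comm]

theorem sum_range_choose_succ_mul_choose_le (a b : ℕ) {k q : ℕ} (hq : q ≤ k + 1) :
    ∑ l ∈ range q, (a + 1).choose l * b.choose (k - l) ≤
      ∑ l ∈ range q, a.choose l * (b + 1).choose (k - l) := by
  cases q with
  | zero => simp
  | succ p =>
    rw [sum_range_succ_choose_succ_mul_choose a b (Nat.le_of_succ_le_succ hq), sum_range_succ]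
    gcongr
    exact b.le_succ

/-- The sequence `(γ_j)_{j=1}^n` is nonincreasing in `j`: for `1 ≤ j ≤ n-1`,
`∑_{l=0}^{q-1} C(j, l)·C(n-j-1, s-l-1) ≤ ∑_{l=0}^{q-1} C(j-1, l)·C(n-j, s-l-1)`. -/
theorem stmt_5 (n s q : ℕ) (hq : 1 ≤ q) (hqs : q ≤ s) (hsn : s ≤ n) :
    ∀ j : ℕ, 1 ≤ j → j ≤ n - 1 →
      ∑ l ∈ Finset.range q, Nat.choose j l * Nat.choose (n - j - 1) (s - l - 1)
        ≤ ∑ l ∈ Finset.range q, Nat.choose (j - 1) l * Nat.choose (n - j) (s - l - 1) := by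
  intro j hj hjn
  obtain ⟨a, rfl⟩ := Nat.exists_eq_add_of_le' hj
  obtain ⟨b, rfl⟩ : ∃ b, n = a + 1 + (b + 1) := ⟨n - a - 2, by omega⟩
  obtain ⟨k, rfl⟩ := Nat.exists_eq_add_of_le' (hq.trans hqs)
  simpa only [Nat.add_sub_cancel_left, Nat.add_sub_cancel, Nat.sub_right_comm _ _ 1] using
    sum_range_choose_succ_mul_choose_le a b hqs
end

section
/- Let n, s, q be integers with 1 ≤ q ≤ s ≤ n and let a ∈ ℝ^n. Then (1/q) ∑_{j=1}^{n} γ_j · a_{(j)} ≥ (1/n) ∑_{i=1}^{n} a_i. (This is the pointwise form of the claim Q_n(Θ; s, q) ≥ 0 in Theorem 3: the ordered weighted empirical loss dominates the empirical average loss.) -/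
/-!
With positions `j` counted from `0`, the convolution `∑ j, C(j, l) C(n-1-j, s-1-l) = C(n, s)`,
summed over `l < q`, shows that the `γ`-weights divided by `q` have total mass one. Replacing `j` by
`j + 1` in the truncated Vandermonde sum `∑ l < q, C(j, l) C(n-1-j, s-1-l)` loses by Pascal's rule a
single boundary term (none if `q = s`), so the weights are nonincreasing in `j`. They are thus
ordered like the sorted entries of `a`, and by Chebyshev's sum inequality the weighted mean is at
least the uniform one.
-/

open Finset

theorem sum_antidiagonal_choose_mul_choose (N l k : ℕ) :
    ∑ ij ∈ antidiagonal N, ij.1.choose l * ij.2.choose k = (N + 1).choose (l + k + 1) := by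
  induction N generalizing k with
  | zero => cases l <;> cases k <;> simp [Nat.choose_eq_zero_of_lt]
  | succ N ih =>
    rw [Nat.sum_antidiagonal_succ', Nat.choose_succ_succ' (N + 1)]
    cases k with
    | zero =>
      simpa [add_comm] using ih 0
    | succ k =>
      simp only [Nat.choose_succ_succ' _ k, mul_add, sum_add_distrib, ih]
      simp [add_assoc]

theorem sum_range_choose_mul_choose (j M r : ℕ) :
    ∑ l ∈ range (r + 1), j.choose l * M.choose (r - l) = (j + M).choose r := by
  rw [Nat.add_choose_eq, Nat.sum_antidiagonal_eq_sum_range_succ_mk]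

theorem sum_range_choose_mul_succ_choose (j M : ℕ) {r q : ℕ} (hq : q ≤ r) :
    ∑ l ∈ range (q + 1), j.choose l * (M + 1).choose (r + 1 - l) =
      ∑ l ∈ range (q + 1), (j + 1).choose l * M.choose (r + 1 - l) +
        j.choose q * M.choose (r - q) := by
  induction q with
  | zero => simp [Nat.choose_succ_succ', add_comm]
  | succ q ih =>
    obtain ⟨k, rfl⟩ := Nat.exists_eq_add_of_le' hq
    have shift : k + (q + 1) - q = k + 1 := by lia
    have shift_succ : k + (q + 1) + 1 - (q + 1) = k + 1 := by lia
    rw [sum_range_succ, ih (by lia), sum_range_succ _ (q + 1), shift, shift_succ,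
      Nat.add_sub_cancel, Nat.choose_succ_succ' M, Nat.choose_succ_succ' j]
    ring

theorem sum_range_succ_choose_mul_choose_le (j M : ℕ) {r q : ℕ} (hq : q ≤ r + 1) :
    ∑ l ∈ range q, (j + 1).choose l * M.choose (r - l) ≤
      ∑ l ∈ range q, j.choose l * (M + 1).choose (r - l) := by
  rcases hq.eq_or_lt with rfl | hqr
  · rw [sum_range_choose_mul_choose, sum_range_choose_mul_choose, add_right_comm, add_assoc]
  · cases q with
    | zero => simp
    | succ q =>
      obtain ⟨r, rfl⟩ := Nat.exists_eq_add_of_le' (show 1 ≤ r by lia)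
      rw [sum_range_choose_mul_succ_choose j M (by lia)]
      exact Nat.le_add_right _ _

/-- The number of `s`-element subsets of `{0, …, n - 1}` that contain `j` as one of their `q`
smallest elements, for `j < n` and `q ≤ s`; the index `l` is the number of elements below `j`.
Positions count from `0`, the largest entry, so that `γ_{j+1}` is
`topRankCount n s q j / C(n, s)`. -/
def topRankCount (n s q j : ℕ) : ℕ :=
  ∑ l ∈ range q, j.choose l * (n - 1 - j).choose (s - l - 1)

theorem sum_topRankCount (n : ℕ) {s q : ℕ} (hqs : q ≤ s) :
    ∑ j : Fin n, topRankCount n s q j = q * n.choose s := by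
  cases n with
  | zero =>
    rcases q.eq_zero_or_pos with rfl | hq
    · simp
    · simp [Nat.choose_eq_zero_of_lt (hq.trans_le hqs)]
  | succ N =>
    have convolution (l : ℕ) (hl : l ∈ range q) :
        ∑ j ∈ range (N + 1), j.choose l * (N - j).choose (s - l - 1) = (N + 1).choose s := by
      have hls : l + (s - l - 1) + 1 = s := by have := mem_range.mp hl; lia
      rw [← Nat.sum_antidiagonal_eq_sum_range_succ fun i j ↦ i.choose l * j.choose (s - l - 1),
        sum_antidiagonal_choose_mul_choose, hls]
    rw [Fin.sum_univ_eq_sum_range (topRankCount (N + 1) s q)]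
    simp only [topRankCount, Nat.add_sub_cancel]
    rw [sum_comm, sum_congr rfl convolution, sum_const, card_range, smul_eq_mul]

theorem antitone_topRankCount (n : ℕ) {s q : ℕ} (hqs : q ≤ s) :
    Antitone fun j : Fin n ↦ topRankCount n s q j := by
  cases n with
  | zero => exact Subsingleton.antitone _
  | succ N =>
    refine Fin.antitone_iff_succ_le.mpr fun i ↦ ?_
    have hi : N - i = N - (i + 1) + 1 := by lia
    simpa only [topRankCount, Fin.val_succ, Fin.val_castSucc, Nat.add_sub_cancel, hi,
      Nat.sub_right_comm s _ 1] using
      sum_range_succ_choose_mul_choose_le i (N - (i + 1)) (r := s - 1) (by lia)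

section OrderedSemifield

variable {K : Type*} [Semifield K] [LinearOrder K] [IsStrictOrderedRing K] [ExistsAddOfLE K]

theorem sum_div_card_le_sum_mul_div_sum_of_monovary {ι : Type*} [Fintype ι] {w b : ι → K}
    (hwb : Monovary w b) (hw : 0 < ∑ i, w i) :
    (∑ i, b i) / Fintype.card ι ≤ (∑ i, w i * b i) / ∑ i, w i := by
  have : Nonempty ι := by
    by_contra h
    simp [not_nonempty_iff.mp h] at hw
  have hcard : (0 : K) < Fintype.card ι := Nat.cast_pos.mpr Fintype.card_pos
  rw [div_le_div_iff₀ hcard hw, mul_comm, mul_comm _ (Fintype.card ι : K)]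
  exact hwb.sum_mul_sum_le_card_mul_sum

theorem stmt_7_general {n s q : ℕ} (hq : 1 ≤ q) (hqs : q ≤ s) (hsn : s ≤ n)
    (a : Fin n → K) (σ : Equiv.Perm (Fin n)) (hσ : Antitone (a ∘ σ)) :
    (1 / (n : K)) * ∑ i, a i ≤
      (1 / (q : K)) * ∑ j : Fin n, (topRankCount n s q j / (n.choose s : K)) * a (σ j) := by
  have total : ∑ j : Fin n, (topRankCount n s q j : K) = q * n.choose s :=
    mod_cast sum_topRankCount n hqs
  have total_pos : 0 < ∑ j : Fin n, (topRankCount n s q j : K) := by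
    rw [total]
    exact mod_cast Nat.mul_pos hq (Nat.choose_pos hsn)
  have monovary : Monovary (fun j : Fin n ↦ (topRankCount n s q j : K)) (a ∘ σ) :=
    (Nat.mono_cast.comp_antitone (antitone_topRankCount n hqs)).monovary hσ
  calc
    (1 / (n : K)) * ∑ i, a i = (∑ j, (a ∘ σ) j) / Fintype.card (Fin n) := by
      simp only [Function.comp_apply, Equiv.sum_comp, Fintype.card_fin, one_div_mul_eq_div]
    _ ≤ (∑ j : Fin n, topRankCount n s q j * (a ∘ σ) j) /
        ∑ j : Fin n, (topRankCount n s q j : K) :=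
      sum_div_card_le_sum_mul_div_sum_of_monovary monovary total_pos
    _ = (1 / (q : K)) * ∑ j : Fin n, (topRankCount n s q j / (n.choose s : K)) * a (σ j) := by
      simp only [total, Function.comp_apply, div_mul_eq_mul_div, ← sum_div, one_mul, div_div,
        mul_comm (q : K)]

end OrderedSemifield

/-- Pointwise form of `Q_n(Θ; s, q) ≥ 0` (Theorem 3): for any `a ∈ ℝⁿ`, the
ordered `γ`-weighted average `(1/q) ∑_j γ_j a_{(j)}` dominates the plain average `(1/n) ∑_i a_i`.
Here `σ` is a permutation sorting `a` in nonincreasing order, so `a (σ j) = a_{(j+1)}` and the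
`γ`-weight of position `j : Fin n` is `(∑_{l<q} C(j, l)·C(n-1-j, s-l-1)) / C(n, s)`. -/
theorem stmt_7 (n s q : ℕ) (hq : 1 ≤ q) (hqs : q ≤ s) (hsn : s ≤ n)
    (a : Fin n → ℝ) (σ : Equiv.Perm (Fin n)) (hσ : Antitone (a ∘ σ)) :
    (1 / (n : ℝ)) * ∑ i, a i ≤
      (1 / (q : ℝ)) * ∑ j : Fin n,
        (((∑ l ∈ Finset.range q,
              Nat.choose j.val l * Nat.choose (n - 1 - j.val) (s - l - 1) : ℕ) : ℝ)
            / (Nat.choose n s : ℝ)) * a (σ j) :=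
  stmt_7_general hq hqs hsn a σ hσ
end

section
/- Fix integers s ≥ 1 and l with 0 ≤ l ≤ s-1, and fix a real number z ∈ (0, 1). Let j : ℕ → ℕ be any sequence such that j(n)/n → z as n → ∞. Then the ratio C(n-s, j(n)-1-l) / C(n-1, j(n)-1) converges to z^l · (1-z)^{s-l-1} as n → ∞. -/
/-!
For `l ≤ k ≤ N` and `l + m ≤ N`, the ratio `C(N - l - m, k - l) / C(N, k)` is a quotient of falling
factorials: those of `k` of order `l` and of `N - k` of order `m`, over that of `N` of order
`l + m`. If `N → ∞` and `k / N → z`, subtracting a constant from `k` does not change the limit, so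
dividing each falling factorial by the power of `N` of the same order shows that the quotient tends
to `z ^ l * (1 - z) ^ m`. The theorem is the case `N = n - 1`, `k = j n - 1`, `m = s - l - 1`.
-/

open Filter Topology

theorem choose_mul_descFactorial {k l : ℕ} (N : ℕ) (hlk : l ≤ k) :
    N.choose k * k.descFactorial l = N.descFactorial l * (N - l).choose (k - l) := by
  rw [Nat.descFactorial_eq_factorial_mul_choose, Nat.descFactorial_eq_factorial_mul_choose,
    mul_left_comm, Nat.choose_mul hlk, mul_assoc]

theorem choose_mul_descFactorial_sub (N k m : ℕ) :
    N.choose k * (N - k).descFactorial m = N.descFactorial m * (N - m).choose k := by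
  rcases le_or_gt (k + m) N with hkm | hkm
  · rw [← Nat.choose_symm (show k ≤ N by lia), choose_mul_descFactorial N (by lia),
      ← Nat.choose_symm (show k ≤ N - m by lia), Nat.sub_right_comm]
  · have hleft : N.choose k * (N - k).descFactorial m = 0 := by
      rw [mul_eq_zero, Nat.choose_eq_zero_iff, Nat.descFactorial_eq_zero_iff_lt]
      lia
    have hright : N.descFactorial m * (N - m).choose k = 0 := by
      rw [mul_eq_zero, Nat.choose_eq_zero_iff, Nat.descFactorial_eq_zero_iff_lt]
      lia
    rw [hleft, hright]

theorem choose_mul_descFactorial_mul_descFactorial {k l : ℕ} (N m : ℕ) (hlk : l ≤ k) :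
    N.choose k * (k.descFactorial l * (N - k).descFactorial m) =
      N.descFactorial (l + m) * (N - (l + m)).choose (k - l) := by
  calc N.choose k * (k.descFactorial l * (N - k).descFactorial m)
      = N.descFactorial l * ((N - l).choose (k - l) * (N - l - (k - l)).descFactorial m) := by
        rw [← mul_assoc, choose_mul_descFactorial N hlk, mul_assoc,
          Nat.sub_sub_sub_cancel_right hlk]
    _ = (N - l).descFactorial m * N.descFactorial l * (N - l - m).choose (k - l) := by
        rw [choose_mul_descFactorial_sub, mul_left_comm, mul_assoc]
    _ = N.descFactorial (l + m) * (N - (l + m)).choose (k - l) := by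
        rw [← Nat.descFactorial_mul_descFactorial (Nat.le_add_right l m), Nat.add_sub_cancel_left,
          Nat.sub_sub]

theorem choose_sub_div_choose (K : Type*) [Field K] [CharZero K] {N k l m : ℕ}
    (hlk : l ≤ k) (hkN : k ≤ N) (hlmN : l + m ≤ N) :
    ((N - (l + m)).choose (k - l) : K) / N.choose k =
      k.descFactorial l * (N - k).descFactorial m / N.descFactorial (l + m) := by
  have hchoose : (N.choose k : K) ≠ 0 := mod_cast (Nat.choose_pos hkN).ne'
  have hdesc : (N.descFactorial (l + m) : K) ≠ 0 := mod_cast (Nat.descFactorial_pos.2 hlmN).ne'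
  rw [div_eq_div_iff hchoose hdesc, mul_comm, mul_comm _ (N.choose k : K)]
  exact_mod_cast (choose_mul_descFactorial_mul_descFactorial N m hlk).symm

section Limits

variable {ι : Type*} {F : Filter ι} {N k : ι → ℕ} {z : ℝ}

theorem tendsto_sub_const_div (hN : Tendsto N F atTop)
    (hk : Tendsto (fun i => (k i : ℝ) / N i) F (𝓝 z)) (c : ℕ) :
    Tendsto (fun i => ((k i - c : ℕ) : ℝ) / N i) F (𝓝 z) := by
  have hc : Tendsto (fun i => (c : ℝ) / N i) F (𝓝 0) :=
    (tendsto_natCast_atTop_atTop.comp hN).const_div_atTop (c : ℝ)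
  have hlower : Tendsto (fun i => (k i : ℝ) / N i - c / N i) F (𝓝 z) := by
    simpa only [sub_zero] using hk.sub hc
  refine tendsto_of_tendsto_of_tendsto_of_le_of_le hlower hk (fun i => ?_) fun i => ?_
  · rw [← sub_div]
    gcongr
    rw [sub_le_iff_le_add, ← Nat.cast_add, Nat.cast_le]
    exact le_tsub_add
  · dsimp only
    gcongr
    exact Nat.sub_le _ _

theorem tendsto_self_div_self (hN : Tendsto N F atTop) :
    Tendsto (fun i => (N i : ℝ) / N i) F (𝓝 1) := by
  refine tendsto_const_nhds.congr' ?_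
  filter_upwards [hN.eventually_ne_atTop 0] with i hi
  exact (div_self (Nat.cast_ne_zero.2 hi)).symm

theorem tendsto_sub_const_div_sub_const (hN : Tendsto N F atTop)
    (hk : Tendsto (fun i => (k i : ℝ) / N i) F (𝓝 z)) (c d : ℕ) :
    Tendsto (fun i => ((k i - c : ℕ) : ℝ) / (N i - d : ℕ)) F (𝓝 z) := by
  have hquot := (tendsto_sub_const_div hN hk c).div
    (tendsto_sub_const_div hN (tendsto_self_div_self hN) d) one_ne_zero
  rw [div_one] at hquot
  refine hquot.congr' ?_
  filter_upwards [hN.eventually_ne_atTop 0] with i hi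
  exact div_div_div_cancel_right₀ (Nat.cast_ne_zero.2 hi) _ _

theorem tendsto_sub_div (hN : Tendsto N F atTop)
    (hk : Tendsto (fun i => (k i : ℝ) / N i) F (𝓝 z)) (hkN : ∀ᶠ i in F, k i ≤ N i) :
    Tendsto (fun i => ((N i - k i : ℕ) : ℝ) / N i) F (𝓝 (1 - z)) := by
  refine ((tendsto_self_div_self hN).sub hk).congr' ?_
  filter_upwards [hkN] with i hi
  rw [Nat.cast_sub hi, sub_div]

theorem tendsto_descFactorial_div_pow (hN : Tendsto N F atTop)
    (hk : Tendsto (fun i => (k i : ℝ) / N i) F (𝓝 z)) (l : ℕ) :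
    Tendsto (fun i => ((k i).descFactorial l : ℝ) / (N i : ℝ) ^ l) F (𝓝 (z ^ l)) := by
  induction l with
  | zero => simpa only [Nat.descFactorial_zero, Nat.cast_one, pow_zero, div_one] using
      tendsto_const_nhds
  | succ l ih =>
    rw [pow_succ']
    refine ((tendsto_sub_const_div hN hk l).mul ih).congr fun i => ?_
    rw [Nat.descFactorial_succ, Nat.cast_mul, pow_succ', div_mul_div_comm]

theorem tendsto_choose_sub_div_choose (hN : Tendsto N F atTop)
    (hk : Tendsto (fun i => (k i : ℝ) / N i) F (𝓝 z)) {l : ℕ} (hlk : ∀ᶠ i in F, l ≤ k i)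
    (hkN : ∀ᶠ i in F, k i ≤ N i) (m : ℕ) :
    Tendsto (fun i => ((N i - (l + m)).choose (k i - l) : ℝ) / (N i).choose (k i)) F
      (𝓝 (z ^ l * (1 - z) ^ m)) := by
  have hnum := (tendsto_descFactorial_div_pow hN hk l).mul
    (tendsto_descFactorial_div_pow hN (tendsto_sub_div hN hk hkN) m)
  have hden := tendsto_descFactorial_div_pow hN (tendsto_self_div_self hN) (l + m)
  rw [one_pow] at hden
  have hquot := hnum.div hden one_ne_zero
  rw [div_one] at hquot
  refine hquot.congr' ?_
  filter_upwards [hlk, hkN, hN.eventually_ge_atTop (l + m), hN.eventually_ne_atTop 0]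
    with i hli hki hlmi hNi
  have hpow : (N i : ℝ) ^ (l + m) ≠ 0 := pow_ne_zero _ (Nat.cast_ne_zero.2 hNi)
  rw [choose_sub_div_choose ℝ hli hki hlmi, Pi.div_apply, div_mul_div_comm, ← pow_add,
    div_div_div_cancel_right₀ hpow]

theorem tendsto_atTop_of_tendsto_div_pos (hN : Tendsto N F atTop)
    (hk : Tendsto (fun i => (k i : ℝ) / N i) F (𝓝 z)) (hz : 0 < z) : Tendsto k F atTop :=
  tendsto_natCast_atTop_iff.1 ((tendsto_natCast_atTop_atTop.comp hN).num hz hk)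

theorem eventually_le_of_tendsto_div_lt_one (hN : Tendsto N F atTop)
    (hk : Tendsto (fun i => (k i : ℝ) / N i) F (𝓝 z)) (hz : z < 1) : ∀ᶠ i in F, k i ≤ N i := by
  filter_upwards [hk.eventually_lt_const hz, hN.eventually_gt_atTop 0] with i hlt hpos
  exact_mod_cast ((div_lt_one (Nat.cast_pos.2 hpos)).1 hlt).le

end Limits

theorem stmt_9_general {s l : ℕ} (hls : l < s) {z : ℝ} {j : ℕ → ℕ}
    (hj : Tendsto (fun n => (j n : ℝ) / (n : ℝ)) atTop (𝓝 z))
    (hlj : ∀ᶠ n in atTop, l < j n) (hjn : ∀ᶠ n in atTop, j n ≤ n) :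
    Tendsto (fun n => ((n - s).choose (j n - 1 - l) : ℝ) / (n - 1).choose (j n - 1)) atTop
      (𝓝 (z ^ l * (1 - z) ^ (s - l - 1))) := by
  have hlim := tendsto_choose_sub_div_choose (tendsto_sub_atTop_nat 1)
    (tendsto_sub_const_div_sub_const tendsto_id hj 1 1) (hlj.mono fun n => Nat.le_sub_one_of_lt)
    (hjn.mono fun n hn => Nat.sub_le_sub_right hn 1) (s - l - 1)
  have hs : 1 + (l + (s - l - 1)) = s := by lia
  simpa only [id_eq, Nat.sub_sub _ 1 (l + _), hs] using hlim

/-- If `j(n)/n → z ∈ (0,1)`, then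
`C(n-s, j(n)-1-l) / C(n-1, j(n)-1) → z^l (1-z)^{s-l-1}` as `n → ∞`. -/
theorem stmt_9 (s l : ℕ) (hs : 1 ≤ s) (hl : l ≤ s - 1) (z : ℝ) (hz0 : 0 < z) (hz1 : z < 1)
    (j : ℕ → ℕ) (hj : Filter.Tendsto (fun n => (j n : ℝ) / (n : ℝ)) Filter.atTop (nhds z)) :
    Filter.Tendsto
      (fun n => (Nat.choose (n - s) (j n - 1 - l) : ℝ) / (Nat.choose (n - 1) (j n - 1) : ℝ))
      Filter.atTop (nhds (z ^ l * (1 - z) ^ (s - l - 1))) :=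
  stmt_9_general (by lia) hj
    ((tendsto_atTop_of_tendsto_div_pos tendsto_id hj hz0).eventually_gt_atTop l)
    (eventually_le_of_tendsto_div_lt_one tendsto_id hj hz1)
end

section
/- Fix integers s, q with 1 ≤ q ≤ s and a real number z ∈ (0, 1). Let j : ℕ → ℕ be any sequence with j(n)/n → z as n → ∞. For each n ≥ s, let γ_{n, j(n)} := (∑_{l=0}^{q-1} C(j(n)-1, l)·C(n-j(n), s-l-1)) / C(n, s). Then n · γ_{n, j(n)} → γ(z) as n → ∞, where γ(z) := ∑_{l=0}^{q-1} z^l (1-z)^{s-l-1} · s!/(l!·(s-l-1)!). (Proposition 1.) -/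
/-!
The polynomial identity `C(a, k) = (∏ i < k, (a - i)) / k!` shows that `C(a, k) / N ^ k` tends to
`c ^ k / k!` whenever `a / N → c` and `N → ∞`. Applied to the three binomial coefficients in
`n * C(j - 1, l) * C(n - j, m) / C(n, l + m + 1)`, it gives the limit of each summand of
`n * γ_{n, j}`, because the numerator and the denominator are both of degree `l + m + 1` in `n`.
-/

open Filter Topology
open scoped Nat

theorem natCast_tsub_eq_max {R : Type*} [Ring R] [LinearOrder R] [IsStrictOrderedRing R]
    (m n : ℕ) : ((m - n : ℕ) : R) = max ((m : R) - n) 0 := by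
  rw [← sub_self (n : R), max_sub_sub_right, ← Nat.cast_max, ← tsub_add_eq_max, Nat.cast_add,
    add_sub_cancel_right]

section Asymptotics

variable {ι : Type*} {f : Filter ι}

theorem tendsto_div_self_of_tendsto_atTop {N : ι → ℝ} (hN : Tendsto N f atTop) :
    Tendsto (fun i => N i / N i) f (𝓝 1) :=
  tendsto_const_nhds.congr' ((hN.eventually_ne_atTop 0).mono fun _ hi => (div_self hi).symm)

theorem tendsto_choose_div_pow {a : ι → ℕ} {N : ι → ℝ} {c : ℝ} (hN : Tendsto N f atTop)
    (ha : Tendsto (fun i => (a i : ℝ) / N i) f (𝓝 c)) (k : ℕ) :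
    Tendsto (fun i => ((a i).choose k : ℝ) / N i ^ k) f (𝓝 (c ^ k / k !)) := by
  have choose_div_pow_eq_prod (i : ι) : ((a i).choose k : ℝ) / N i ^ k =
      (∏ r ∈ Finset.range k, ((a i : ℝ) / N i - r / N i)) / k ! := by
    simp only [← sub_div, Finset.prod_div_distrib, Finset.prod_const, Finset.card_range]
    rw [Nat.cast_choose_eq_descPochhammer_div, descPochhammer_eval_eq_prod_range, div_right_comm]
  have tendsto_factor (r : ℕ) : Tendsto (fun i => (a i : ℝ) / N i - r / N i) f (𝓝 c) := by
    simpa using ha.sub (hN.const_div_atTop (r : ℝ))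
  simpa only [choose_div_pow_eq_prod, Finset.prod_const, Finset.card_range] using
    (tendsto_finsetProd (Finset.range k) fun r _ => tendsto_factor r).div_const (k ! : ℝ)

theorem tendsto_natCast_tsub_div {a b : ι → ℕ} {N : ι → ℝ} {x y : ℝ} (hN : ∀ᶠ i in f, 0 ≤ N i)
    (ha : Tendsto (fun i => (a i : ℝ) / N i) f (𝓝 x))
    (hb : Tendsto (fun i => (b i : ℝ) / N i) f (𝓝 y)) :
    Tendsto (fun i => ((a i - b i : ℕ) : ℝ) / N i) f (𝓝 (max (x - y) 0)) := by
  refine ((ha.sub hb).max tendsto_const_nhds).congr' ?_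
  filter_upwards [hN] with i hi
  rw [natCast_tsub_eq_max, ← max_div_div_right hi, sub_div, zero_div]

theorem tendsto_mul_choose_mul_choose_div_choose {a b N : ι → ℕ} {x y : ℝ}
    (hN : Tendsto N f atTop)
    (ha : Tendsto (fun i => (a i : ℝ) / N i) f (𝓝 x))
    (hb : Tendsto (fun i => (b i : ℝ) / N i) f (𝓝 y)) (l m : ℕ) :
    Tendsto
      (fun i => (N i : ℝ) * (((a i).choose l * (b i).choose m : ℝ) / (N i).choose (l + m + 1)))
      f (𝓝 (x ^ l * y ^ m * ((l + m + 1)! / (l ! * m !)))) := by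
  have hN' : Tendsto (fun i => (N i : ℝ)) f atTop := tendsto_natCast_atTop_atTop.comp hN
  have denominator_ne : (1 : ℝ) ^ (l + m + 1) / (l + m + 1)! ≠ 0 := by positivity
  have numerator_limit := (tendsto_choose_div_pow hN' ha l).mul (tendsto_choose_div_pow hN' hb m)
  have denominator_limit :=
    tendsto_choose_div_pow hN' (tendsto_div_self_of_tendsto_atTop hN') (l + m + 1)
  have limit_eq : x ^ l / (l ! : ℝ) * (y ^ m / m !) / (1 ^ (l + m + 1) / (l + m + 1)!) =
      x ^ l * y ^ m * ((l + m + 1)! / (l ! * m !)) := by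
    field_simp
    simp
  rw [← limit_eq]
  refine (numerator_limit.div denominator_limit denominator_ne).congr' ?_
  filter_upwards [hN'.eventually_ne_atTop 0] with i hi
  simp only [Pi.div_apply]
  field_simp
  ring

end Asymptotics

theorem stmt_10_general (s q : ℕ) (hqs : q ≤ s) (z : ℝ) (hz1 : z ≤ 1)
    (j : ℕ → ℕ) (hj : Tendsto (fun n => (j n : ℝ) / (n : ℝ)) atTop (𝓝 z)) :
    Tendsto
      (fun n : ℕ => (n : ℝ) *
        (((∑ l ∈ Finset.range q,
              Nat.choose (j n - 1) l * Nat.choose (n - j n) (s - l - 1) : ℕ) : ℝ)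
          / (Nat.choose n s : ℝ)))
      atTop
      (𝓝 (∑ l ∈ Finset.range q,
        z ^ l * (1 - z) ^ (s - l - 1) * ((s ! : ℝ) / ((l ! : ℝ) * ((s - l - 1)! : ℝ))))) := by
  have hz0 : 0 ≤ z := ge_of_tendsto' hj fun n => by positivity
  have natCast_nonneg : ∀ᶠ n : ℕ in atTop, (0 : ℝ) ≤ n := .of_forall Nat.cast_nonneg
  have tendsto_below : Tendsto (fun n => ((j n - 1 : ℕ) : ℝ) / n) atTop (𝓝 z) := by
    simpa [hz0] using
      tendsto_natCast_tsub_div natCast_nonneg hj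
        (tendsto_const_div_atTop_nhds_zero_nat ((1 : ℕ) : ℝ))
  have tendsto_above : Tendsto (fun n => ((n - j n : ℕ) : ℝ) / n) atTop (𝓝 (1 - z)) := by
    simpa [hz1] using tendsto_natCast_tsub_div natCast_nonneg
      (tendsto_div_self_of_tendsto_atTop tendsto_natCast_atTop_atTop) hj
  simp only [Nat.cast_sum, Nat.cast_mul, Finset.sum_div, Finset.mul_sum]
  refine tendsto_finsetSum _ fun l hl => ?_
  have degree_eq : l + (s - l - 1) + 1 = s := by
    have := Finset.mem_range.1 hl
    omega
  simpa only [degree_eq, id] using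
    tendsto_mul_choose_mul_choose_div_choose tendsto_id tendsto_below tendsto_above l (s - l - 1)

/-- Proposition 1. If `j(n)/n → z ∈ (0,1)`, then
`n · γ_{n, j(n)} → γ(z) = ∑_{l=0}^{q-1} z^l (1-z)^{s-l-1} · s!/(l!·(s-l-1)!)`. -/
theorem stmt_10 (s q : ℕ) (hq : 1 ≤ q) (hqs : q ≤ s) (z : ℝ) (hz0 : 0 < z) (hz1 : z < 1)
    (j : ℕ → ℕ) (hj : Filter.Tendsto (fun n => (j n : ℝ) / (n : ℝ)) Filter.atTop (nhds z)) :
    Filter.Tendsto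
      (fun n : ℕ => (n : ℝ) *
        (((∑ l ∈ Finset.range q,
              Nat.choose (j n - 1) l * Nat.choose (n - j n) (s - l - 1) : ℕ) : ℝ)
          / (Nat.choose n s : ℝ)))
      Filter.atTop
      (nhds (∑ l ∈ Finset.range q,
        z ^ l * (1 - z) ^ (s - l - 1) *
          ((Nat.factorial s : ℝ) / ((Nat.factorial l : ℝ) * (Nat.factorial (s - l - 1) : ℝ))))) :=
  stmt_10_general s q hqs z hz1.le j hj
end

section
/- Let n, s, q be integers with 1 ≤ q ≤ s ≤ n, let E be a real inner product space, let ρ ≥ 0, let L_1,…,L_n : E → ℝ be ρ-weakly convex (i.e., θ ↦ L_i(θ) + (ρ/2)‖θ‖² is convex for each i), and let R : E → ℝ be convex. Define L_q(θ) := (1/q) ∑_{j=1}^{n} γ_j · b_{(j)}(θ) + R(θ), where b_{(1)}(θ) ≥ ⋯ ≥ b_{(n)}(θ) are the values L_1(θ),…,L_n(θ) sorted in nonincreasing order (with multiplicity). Then L_q is ρ-weakly convex, i.e., θ ↦ L_q(θ) + (ρ/2)‖θ‖² is convex. (Claimed in the proof of Theorem 2, part 2.) -/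
/-- `sortDesc a` is the vector `a : Fin n → ℝ` sorted in nonincreasing order (with multiplicity). -/
noncomputable def sortDesc {n : ℕ} (a : Fin n → ℝ) : Fin n → ℝ :=
  fun j => a (Tuple.sort (fun i => -a i) j)

/-- `gammaR n s q j` is the coefficient `γ_{j+1} = (∑_{l=0}^{q-1} C(j, l)·C(n-1-j, s-l-1)) / C(n,s)`
(with the `Fin n` index `j` corresponding to the paper's index `j+1 ∈ {1,…,n}`). -/
noncomputable def gammaR (n s q : ℕ) (j : Fin n) : ℝ :=
  ((∑ l ∈ Finset.range q,
      Nat.choose j.val l * Nat.choose (n - 1 - j.val) (s - l - 1) : ℕ) : ℝ)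
    / (Nat.choose n s : ℝ)

/-!
The identity `∑ⱼ γⱼ = q` lets the quadratic term be absorbed into the losses, since sorting commutes
with adding a constant. It then suffices that `θ ↦ ∑ⱼ γⱼ b₍ⱼ₎(θ)` is convex when the losses are.
Because `γ` is nonincreasing, the rearrangement inequality makes this sum the maximum of
`∑ⱼ γⱼ b_{σ(j)}(θ)` over all permutations `σ`, and because `γ` is nonnegative, each of the
competing sums is convex.
-/

section Convexity

variable {𝕜 E β : Type*} [Semiring 𝕜] [PartialOrder 𝕜] [AddCommMonoid E] [SMul 𝕜 E]
  [AddCommMonoid β] [PartialOrder β] [IsOrderedAddMonoid β] [Module 𝕜 β] {S : Set E}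

lemma convexOn_finset_sum {ι : Type*} {t : Finset ι} {f : ι → E → β} (hS : Convex 𝕜 S)
    (hf : ∀ i ∈ t, ConvexOn 𝕜 S (f i)) : ConvexOn 𝕜 S (∑ i ∈ t, f i) :=
  Finset.sum_induction f (ConvexOn 𝕜 S) (fun _ _ => ConvexOn.add) (convexOn_const 0 hS) hf

lemma convexOn_of_exists_convexOn_minorant [PosSMulMono 𝕜 β] {F : E → β} (hS : Convex 𝕜 S)
    (hF : ∀ z ∈ S, ∃ φ : E → β, ConvexOn 𝕜 S φ ∧ (∀ x ∈ S, φ x ≤ F x) ∧ φ z = F z) :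
    ConvexOn 𝕜 S F := by
  refine ⟨hS, fun x hx y hy a b ha hb hab => ?_⟩
  obtain ⟨φ, hφ, hφ_le, hφ_eq⟩ := hF (a • x + b • y) (hS hx hy ha hb hab)
  calc F (a • x + b • y) = φ (a • x + b • y) := hφ_eq.symm
    _ ≤ a • φ x + b • φ y := hφ.2 hx hy ha hb hab
    _ ≤ a • F x + b • F y := by
      gcongr
      exacts [hφ_le x hx, hφ_le y hy]

end Convexity

section SortDesc

variable {n : ℕ} {g : Fin n → ℝ}

lemma sortDesc_antitone (a : Fin n → ℝ) : Antitone (sortDesc a) :=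
  fun _ _ hij => neg_le_neg_iff.mp (Tuple.monotone_sort (fun i => -a i) hij)

lemma sortDesc_comp_of_monotone {φ : ℝ → ℝ} (hφ : Monotone φ) (a : Fin n → ℝ) :
    sortDesc (φ ∘ a) = φ ∘ sortDesc a :=
  Tuple.unique_antitone (sortDesc_antitone (φ ∘ a)) (hφ.comp_antitone (sortDesc_antitone a))

lemma sortDesc_add_const (a : Fin n → ℝ) (c : ℝ) (j : Fin n) :
    sortDesc (fun i => a i + c) j = sortDesc a j + c :=
  congrFun (sortDesc_comp_of_monotone (monotone_id.add_const c) a) j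

lemma sum_mul_comp_perm_le_sum_mul_sortDesc (hg : Antitone g) (a : Fin n → ℝ)
    (σ : Equiv.Perm (Fin n)) : ∑ j, g j * a (σ j) ≤ ∑ j, g j * sortDesc a j := by
  have hmono : Monovary g (sortDesc a) := hg.monovary (sortDesc_antitone a)
  simpa [sortDesc] using
    hmono.sum_mul_comp_perm_le_sum_mul (σ := σ.trans (Tuple.sort fun i => -a i).symm)

variable {E : Type*} [AddCommMonoid E] [Module ℝ E] {S : Set E}

lemma convexOn_sum_mul_sortDesc (hg : Antitone g) (hg_nonneg : ∀ j, 0 ≤ g j) (hS : Convex ℝ S)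
    {f : Fin n → E → ℝ} (hf : ∀ i, ConvexOn ℝ S (f i)) :
    ConvexOn ℝ S fun θ => ∑ j, g j * sortDesc (fun i => f i θ) j := by
  refine convexOn_of_exists_convexOn_minorant hS fun z _ => ?_
  let σ := Tuple.sort fun i => -f i z
  refine ⟨fun θ => ∑ j, g j * f (σ j) θ, ?_, fun x _ => ?_, rfl⟩
  · have hsum := convexOn_finset_sum (t := Finset.univ) hS
      fun j _ => (hf (σ j)).smul (hg_nonneg j)
    exact hsum.congr fun θ _ => by simp only [Finset.sum_apply, smul_eq_mul]
  · exact sum_mul_comp_perm_le_sum_mul_sortDesc hg (fun i => f i x) σ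

lemma convexOn_sum_mul_sortDesc_add (hg : Antitone g) (hg_nonneg : ∀ j, 0 ≤ g j)
    (hS : Convex ℝ S) {f : Fin n → E → ℝ} {h : E → ℝ}
    (hf : ∀ i, ConvexOn ℝ S fun θ => f i θ + h θ) :
    ConvexOn ℝ S fun θ => ∑ j, g j * sortDesc (fun i => f i θ) j + (∑ j, g j) * h θ := by
  refine (convexOn_sum_mul_sortDesc hg hg_nonneg hS hf).congr fun θ _ => ?_
  simp only [sortDesc_add_const, mul_add, Finset.sum_add_distrib, Finset.sum_mul]

end SortDesc

section Binomial

open Finset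

lemma sum_antidiagonal_choose_mul_choose_s14 (m a b : ℕ) :
    ∑ p ∈ antidiagonal m, p.1.choose a * p.2.choose b = (m + 1).choose (a + b + 1) := by
  induction m generalizing b with
  | zero => cases a <;> cases b <;> simp [Nat.choose_eq_zero_of_lt]
  | succ m ih =>
    rw [Nat.sum_antidiagonal_succ']
    cases b with
    | zero =>
      have hockey_stick := ih 0
      simp only [Nat.choose_zero_right, mul_one, add_zero] at hockey_stick ⊢
      rw [hockey_stick, Nat.choose_succ_succ' (m + 1) a]
    | succ b =>
      simp only [Nat.choose_succ_succ' _ b, mul_add, sum_add_distrib, ih, Nat.choose_zero_succ,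
        mul_zero, zero_add]
      exact (Nat.choose_succ_succ' (m + 1) (a + b + 1)).symm

lemma sum_range_choose_succ_mul (f : ℕ → ℕ) (j q : ℕ) :
    ∑ l ∈ range (q + 1), (j + 1).choose l * f l =
      ∑ l ∈ range (q + 1), j.choose l * f l + ∑ l ∈ range q, j.choose l * f (l + 1) := by
  simp only [sum_range_succ' _ q, Nat.choose_succ_succ', add_mul, sum_add_distrib,
    Nat.choose_zero_right]
  ring

lemma sum_range_choose_mul_choose_shift_le {q k : ℕ} (hqk : q ≤ k) (j M : ℕ) :
    ∑ l ∈ range (q + 1), (j + 1).choose l * M.choose (k - l) ≤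
      ∑ l ∈ range (q + 1), j.choose l * (M + 1).choose (k - l) := by
  have pascal : ∀ l ∈ range q,
      (M + 1).choose (k - l) = M.choose (k - l) + M.choose (k - (l + 1)) := fun l hl => by
    obtain ⟨t, rfl⟩ := Nat.exists_eq_add_of_lt ((mem_range.mp hl).trans_le hqk)
    rw [show l + t + 1 - l = t + 1 by lia, show l + t + 1 - (l + 1) = t by lia,
      Nat.choose_succ_succ', add_comm]
  calc ∑ l ∈ range (q + 1), (j + 1).choose l * M.choose (k - l)
      = ∑ l ∈ range (q + 1), j.choose l * M.choose (k - l)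
          + ∑ l ∈ range q, j.choose l * M.choose (k - (l + 1)) :=
        sum_range_choose_succ_mul (fun l => M.choose (k - l)) j q
    _ = ∑ l ∈ range q, j.choose l * (M + 1).choose (k - l) + j.choose q * M.choose (k - q) := by
        rw [sum_congr rfl fun l hl => congrArg (j.choose l * ·) (pascal l hl), sum_range_succ]
        simp only [mul_add, sum_add_distrib]
        ring
    _ ≤ ∑ l ∈ range (q + 1), j.choose l * (M + 1).choose (k - l) := by
        rw [sum_range_succ]
        gcongr
        exact M.le_succ

end Binomial

section Gamma

variable {n s q : ℕ}

lemma gammaR_nonneg (n s q : ℕ) (j : Fin n) : 0 ≤ gammaR n s q j := by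
  unfold gammaR
  positivity

lemma gammaR_antitone (n : ℕ) (hqs : q ≤ s) : Antitone (gammaR n s q) := by
  rcases n with _ | n
  · exact Subsingleton.antitone _
  rcases q with _ | q
  · exact fun _ _ _ => by simp [gammaR]
  refine Fin.antitone_iff_succ_le.mpr fun i => ?_
  have hle := sum_range_choose_mul_choose_shift_le (Nat.le_sub_one_of_lt hqs) i (n - (i + 1))
  rw [show n - (i + 1) + 1 = n - i by lia] at hle
  simp only [gammaR, Fin.val_succ, Fin.val_castSucc, Nat.add_sub_cancel, Nat.sub_right_comm s _ 1]
  gcongr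

lemma sum_gammaR (hqs : q ≤ s) (hsn : s ≤ n) : ∑ j, gammaR n s q j = q := by
  rcases n with _ | m
  · simp [show q = 0 by lia]
  have sum_eq_choose : ∀ l ∈ Finset.range q,
      ∑ j : Fin (m + 1), (j : ℕ).choose l * (m - j).choose (s - l - 1) = (m + 1).choose s := by
    intro l hl
    have hls : l < s := (Finset.mem_range.mp hl).trans_le hqs
    rw [Fin.sum_univ_eq_sum_range fun j => j.choose l * (m - j).choose (s - l - 1),
      ← Finset.Nat.sum_antidiagonal_eq_sum_range_succ fun i j => i.choose l * j.choose (s - l - 1),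
      sum_antidiagonal_choose_mul_choose_s14, show l + (s - l - 1) + 1 = s by lia]
  have choose_ne_zero : ((m + 1).choose s : ℝ) ≠ 0 := by
    exact_mod_cast (Nat.choose_pos hsn).ne'
  simp only [gammaR, ← Finset.sum_div, Nat.add_sub_cancel]
  rw [div_eq_iff choose_ne_zero, ← Nat.cast_sum, Finset.sum_comm,
    Finset.sum_congr rfl sum_eq_choose]
  simp

end Gamma

theorem stmt_14_general {n s q : ℕ} (hq : 1 ≤ q) (hqs : q ≤ s) (hsn : s ≤ n)
    {E : Type*} [AddCommMonoid E] [Module ℝ E] {S : Set E} {h : E → ℝ} {L : Fin n → E → ℝ}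
    (hL : ∀ i, ConvexOn ℝ S fun θ => L i θ + h θ) {R : E → ℝ} (hR : ConvexOn ℝ S R) :
    ConvexOn ℝ S fun θ =>
      ((1 / (q : ℝ)) * ∑ j : Fin n, gammaR n s q j * sortDesc (fun i => L i θ) j + R θ) + h θ := by
  have hq_pos : (0 : ℝ) < q := by exact_mod_cast hq
  have hsorted := convexOn_sum_mul_sortDesc_add (gammaR_antitone n hqs) (gammaR_nonneg n s q)
    hR.1 hL
  rw [sum_gammaR hqs hsn] at hsorted
  refine ((hsorted.smul (one_div_nonneg.mpr hq_pos.le)).add hR).congr fun θ _ => ?_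
  simp only [Pi.add_apply, smul_eq_mul]
  field_simp
  ring

/-- proof of Theorem 2, part 2. If each `L_i` is `ρ`-weakly convex and `R` is
convex, then the ordered loss `L_q(θ) = (1/q) ∑_j γ_j b_{(j)}(θ) + R(θ)` is `ρ`-weakly convex,
i.e. `θ ↦ L_q(θ) + (ρ/2)‖θ‖²` is convex. -/
theorem stmt_14 (n s q : ℕ) (hq : 1 ≤ q) (hqs : q ≤ s) (hsn : s ≤ n)
    (E : Type*) [NormedAddCommGroup E] [InnerProductSpace ℝ E]
    (ρ : ℝ) (hρ : 0 ≤ ρ)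
    (L : Fin n → E → ℝ)
    (hL : ∀ i, ConvexOn ℝ Set.univ (fun θ => L i θ + ρ / 2 * ‖θ‖ ^ 2))
    (R : E → ℝ) (hR : ConvexOn ℝ Set.univ R) :
    ConvexOn ℝ Set.univ (fun θ =>
      ((1 / (q : ℝ)) * ∑ j : Fin n, gammaR n s q j * sortDesc (fun i => L i θ) j + R θ)
        + ρ / 2 * ‖θ‖ ^ 2) :=
  stmt_14_general hq hqs hsn hL hR
end

section
/- Let n, s, q be integers with 1 ≤ q ≤ s ≤ n, let E be a real inner product space, let L_1,…,L_n : E → ℝ and R : E → ℝ be convex, and fix θ ∈ E. For each subset S ⊆ {1,…,n} with |S| = s, let Q(S) be the set of q indices i ∈ S with the largest values L_i(θ), ties broken in favor of smaller index. Let g_i be a subgradient of L_i at θ for each i (i.e., L_i(θ') ≥ L_i(θ) + ⟨g_i, θ' − θ⟩ for all θ'), and let g_R be a subgradient of R at θ. Define L_q(θ') := (1/q) ∑_{j=1}^{n} γ_j · b_{(j)}(θ') + R(θ'), where b_{(1)}(θ') ≥ ⋯ ≥ b_{(n)}(θ') are the values L_1(θ'),…,L_n(θ') sorted in nonincreasing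 order. Then the vector g := C(n, s)^{-1} ∑_{S ⊆ {1,…,n}, |S| = s} ( (1/q) ∑_{i ∈ Q(S)} g_i + g_R ) is a subgradient of L_q at θ, i.e., L_q(θ') ≥ L_q(θ) + ⟨g, θ' − θ⟩ for all θ' ∈ E. (Theorem 1: the expected ordered-SGD update direction is a subgradient of the ordered empirical loss L_q.) -/
open RealInnerProductSpace

/-!
Write `∑_{|S| = s}` for the sum over the `s`-element sets of indices, and `top_q(a; S)` for the sum
of the `q` largest values of `a` on `S`. Rank the indices from `0` by decreasing value of `a`. The
index of rank `j` contributes to `top_q(a; S)` exactly when it lies in `S` together with `l < q` of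
the `j` indices ranked before it, and `C(j, l) * C(n - 1 - j, s - l - 1)` sets `S` realise a given
`l`. Hence `∑_{|S| = s} top_q(a; S) = C(n, s) * ∑ j, γ_j * a_(j)`.

Summing the subgradient inequalities over `i ∈ Q S` gives
`top_q(L θ; S) + ∑ i ∈ Q S, ⟪g i, θ' - θ⟫ ≤ ∑ i ∈ Q S, L i θ' ≤ top_q(L θ'; S)`,
and averaging over `S` yields the claim.
-/

section

open Finset

section IsTopSubset

variable {ι M : Type*}

/-- `T` consists of `q` elements of `S` at which `a` is largest among the elements of `S`.
Ties may be broken arbitrarily, so `T` need not be unique. -/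
structure IsTopSubset [LE M] (a : ι → M) (q : ℕ) (S T : Finset ι) : Prop where
  subset : T ⊆ S
  card_eq : #T = q
  le_of_notMem : ∀ i ∈ T, ∀ k ∈ S, k ∉ T → a k ≤ a i

variable [AddCommMonoid M] [LinearOrder M] [IsOrderedAddMonoid M]

theorem IsTopSubset.sum_le_sum {a : ι → M} {q : ℕ} {S T P : Finset ι} (hT : IsTopSubset a q S T)
    (hPS : P ⊆ S) (hP : #P = q) : ∑ i ∈ P, a i ≤ ∑ i ∈ T, a i := by
  classical
  have card_sdiff_eq : #(P \ T) = #(T \ P) := card_sdiff_comm (hP.trans hT.card_eq.symm)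
  have sum_sdiff_le : ∑ i ∈ P \ T, a i ≤ ∑ i ∈ T \ P, a i := by
    rcases (T \ P).eq_empty_or_nonempty with hempty | hne
    · rw [hempty, card_empty, card_eq_zero] at card_sdiff_eq
      rw [hempty, card_sdiff_eq]
    · obtain ⟨m, hm, hmin⟩ := exists_min_image (T \ P) a hne
      calc ∑ i ∈ P \ T, a i ≤ #(P \ T) • a m := by
            refine sum_le_card_nsmul _ _ _ fun k hk => ?_
            rw [mem_sdiff] at hm hk
            exact hT.le_of_notMem m hm.1 k (hPS hk.1) hk.2
        _ = #(T \ P) • a m := by rw [card_sdiff_eq]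
        _ ≤ ∑ i ∈ T \ P, a i := card_nsmul_le_sum _ _ _ hmin
  rw [← sum_inter_add_sum_sdiff P T, ← sum_inter_add_sum_sdiff T P, inter_comm T P]
  gcongr

theorem IsTopSubset.sum_eq_sum {a : ι → M} {q : ℕ} {S T T' : Finset ι} (hT : IsTopSubset a q S T)
    (hT' : IsTopSubset a q S T') : ∑ i ∈ T, a i = ∑ i ∈ T', a i :=
  le_antisymm (hT'.sum_le_sum hT.subset hT.card_eq) (hT.sum_le_sum hT'.subset hT'.card_eq)

end IsTopSubset

section FirstBy

variable {ι α : Type*} [LinearOrder α]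

/-- The `q` elements of `S` with the smallest ranks, where `r` assigns ranks to indices (all of `S`
if it has fewer than `q` elements). The condition counts the elements of `S` ranked before `i`. -/
def firstBy (r : ι → α) (q : ℕ) (S : Finset ι) : Finset ι :=
  {i ∈ S | #{k ∈ S | r k < r i} < q}

theorem card_firstBy {r : ι → α} (hr : r.Injective) (q : ℕ) (S : Finset ι) :
    #(firstBy r q S) = min q #S := by
  classical
  induction S using induction_on_max_value r with
  | empty => simp [firstBy]
  | insert m S hm hmax ih =>
    have hlt : ∀ k ∈ S, r k < r m := fun k hk =>
      (hmax k hk).lt_of_ne (hr.ne (ne_of_mem_of_not_mem hk hm))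
    have filter_lt_max : {k ∈ insert m S | r k < r m} = S := by
      rw [filter_insert, if_neg (lt_irrefl _), filter_true_of_mem hlt]
    have filter_lt : ∀ i ∈ S, {k ∈ insert m S | r k < r i} = {k ∈ S | r k < r i} := fun i hi => by
      rw [filter_insert, if_neg (hlt i hi).not_gt]
    have firstBy_insert : firstBy r q (insert m S) =
        if #S < q then insert m (firstBy r q S) else firstBy r q S := by
      rw [firstBy, filter_insert, filter_lt_max,
        filter_congr fun i hi => by rw [filter_lt i hi], firstBy]
    rw [firstBy_insert, card_insert_of_notMem hm]
    split_ifs with hS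
    · have hm' : m ∉ firstBy r q S := fun h => hm (mem_filter.1 h).1
      rw [card_insert_of_notMem hm', ih]
      omega
    · rw [ih]
      omega

theorem isTopSubset_firstBy {M : Type*} [LE M] {a : ι → M} {r : ι → α} (hr : r.Injective)
    (ha : ∀ i k, r i ≤ r k → a k ≤ a i) {q : ℕ} {S : Finset ι} (hq : q ≤ #S) :
    IsTopSubset a q S (firstBy r q S) where
  subset := filter_subset _ _
  card_eq := by rw [card_firstBy hr, min_eq_left hq]
  le_of_notMem i hi k hkS hk := by
    refine ha i k (le_of_not_gt fun hki => hk ?_)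
    have hsub : ({x ∈ S | r x < r k} : Finset ι) ⊆ {x ∈ S | r x < r i} :=
      monotone_filter_right _ fun _ _ hx => hx.trans hki
    exact mem_filter.2 ⟨hkS, (card_le_card hsub).trans_lt (mem_filter.1 hi).2⟩

end FirstBy

section Counting

variable {ι : Type*} [DecidableEq ι]

theorem card_filter_powersetCard_union_card_inter {A B : Finset ι} (hAB : Disjoint A B) (l m : ℕ) :
    #{S ∈ powersetCard (l + m) (A ∪ B) | #(S ∩ A) = l} = (#A).choose l * (#B).choose m := by
  have inter_union_inter {S : Finset ι} (hS : S ⊆ A ∪ B) : S ∩ A ∪ S ∩ B = S := by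
    rw [← inter_union_distrib_left, inter_eq_left.2 hS]
  have union_inter_left {P R : Finset ι} (hP : P ⊆ A) (hR : R ⊆ B) : (P ∪ R) ∩ A = P := by
    rw [union_inter_distrib_right, inter_eq_left.2 hP,
      disjoint_iff_inter_eq_empty.1 (hAB.symm.mono_left hR), union_empty]
  have union_inter_right {P R : Finset ι} (hP : P ⊆ A) (hR : R ⊆ B) : (P ∪ R) ∩ B = R := by
    rw [union_inter_distrib_right, inter_eq_left.2 hR,
      disjoint_iff_inter_eq_empty.1 (hAB.mono_left hP), empty_union]
  rw [← card_powersetCard, ← card_powersetCard, ← card_product]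
  refine card_bij' (fun S _ => (S ∩ A, S ∩ B)) (fun p _ => p.1 ∪ p.2) ?_ ?_ ?_ ?_ <;>
    simp only [mem_filter, mem_product, mem_powersetCard, and_imp, Prod.forall, Prod.mk.injEq]
  · intro S hS hcard hcardA
    have hcard_add : #S = #(S ∩ A) + #(S ∩ B) := by
      rw [← card_union_of_disjoint (hAB.mono inter_subset_right inter_subset_right),
        inter_union_inter hS]
    exact ⟨⟨inter_subset_right, hcardA⟩, inter_subset_right, by omega⟩
  · intro P R hP hcardP hR hcardR
    rw [union_inter_left hP hR, card_union_of_disjoint (hAB.mono hP hR), hcardP, hcardR]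
    exact ⟨⟨union_subset_union hP hR, rfl⟩, rfl⟩
  · exact fun S hS _ _ => inter_union_inter hS
  · exact fun P R hP _ hR _ => ⟨union_inter_left hP hR, union_inter_right hP hR⟩

theorem card_filter_powersetCard_mem_card_inter [Fintype ι] {A : Finset ι} {i : ι} (hi : i ∉ A)
    (l m : ℕ) :
    #{S ∈ powersetCard (l + m + 1) (univ : Finset ι) | i ∈ S ∧ #(S ∩ A) = l} =
      (#A).choose l * (#(insert i A)ᶜ).choose m := by
  have hdisj : Disjoint A (insert i A)ᶜ := disjoint_compl_right.mono_left (subset_insert i A)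
  have hunion : A ∪ (insert i A)ᶜ = {i}ᶜ := by
    ext
    simp only [mem_union, mem_compl, mem_insert, mem_singleton]
    grind
  rw [← card_filter_powersetCard_union_card_inter hdisj, hunion]
  refine card_bij' (fun S _ => S.erase i) (fun S _ => insert i S) ?_ ?_ ?_ ?_ <;>
    simp only [mem_filter, mem_powersetCard, subset_univ, true_and, subset_compl_singleton,
      and_imp]
  · intro S hcard hiS hcardA
    have hiSA : i ∉ S ∩ A := fun h => hi (mem_inter.1 h).2
    rw [card_erase_of_mem hiS, hcard, erase_inter, erase_eq_of_notMem hiSA]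
    exact ⟨⟨notMem_erase i S, rfl⟩, hcardA⟩
  · intro S hiS hcard hcardA
    rw [card_insert_of_notMem hiS, hcard, insert_inter_of_notMem hi]
    exact ⟨rfl, mem_insert_self i S, hcardA⟩
  · exact fun S _ hiS _ => insert_erase hiS
  · exact fun S hiS _ _ => erase_insert hiS

theorem card_filter_mem_firstBy [Fintype ι] {n s q : ℕ} (hqs : q ≤ s) (r : ι ≃ Fin n) (i : ι) :
    #{S ∈ powersetCard s (univ : Finset ι) | i ∈ firstBy r q S} =
      ∑ l ∈ range q, (r i : ℕ).choose l * (n - 1 - r i).choose (s - l - 1) := by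
  set A : Finset ι := {k | r k < r i} with hA
  have hiA : i ∉ A := by simp [hA]
  have card_A : #A = r i := by
    rw [← card_map r.toEmbedding, ← Fin.card_Iio]
    congr 1
    ext
    simp [hA]
  have card_compl_insert : #(insert i A)ᶜ = n - 1 - r i := by
    rw [card_compl, card_insert_of_notMem hiA, card_A, Fintype.card_congr r, Fintype.card_fin]
    omega
  have filter_eq_inter (S : Finset ι) : {k ∈ S | r k < r i} = S ∩ A := by ext; simp [hA]
  rw [card_eq_sum_card_fiberwise (f := fun S => #(S ∩ A)) (t := range q)]
  · refine sum_congr rfl fun l hl => ?_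
    have hlq := mem_range.1 hl
    rw [← card_compl_insert, ← card_A, ← card_filter_powersetCard_mem_card_inter hiA,
      show l + (s - l - 1) + 1 = s by omega, filter_filter]
    congr 1
    refine filter_congr fun S _ => ?_
    simp only [firstBy, mem_filter, filter_eq_inter]
    grind
  · intro S hS
    have hiS : i ∈ firstBy r q S := (mem_filter.1 hS).2
    rw [firstBy, mem_filter, filter_eq_inter] at hiS
    exact mem_coe.2 (mem_range.2 hiS.2)

end Counting

section OrderedSum

variable {n s q : ℕ}

/-- The linear combination `∑ j, γ_j * a_(j)` of the order statistics of `a`. The ordered empirical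
loss is `q⁻¹` times this quantity at the vector of losses, plus the regulariser. -/
noncomputable def orderedSum (s q : ℕ) (a : Fin n → ℝ) : ℝ :=
  ∑ j, gammaR n s q j * sortDesc a j

theorem sum_sum_firstBy {ι : Type*} [Fintype ι] (hqs : q ≤ s) (hsn : s ≤ n) (r : ι ≃ Fin n)
    (a : ι → ℝ) :
    ∑ S ∈ powersetCard s univ, ∑ i ∈ firstBy r q S, a i =
      n.choose s * ∑ j, gammaR n s q j * a (r.symm j) := by
  classical
  have choose_ne_zero : (n.choose s : ℝ) ≠ 0 := by exact_mod_cast (Nat.choose_pos hsn).ne'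
  calc ∑ S ∈ powersetCard s univ, ∑ i ∈ firstBy r q S, a i
      = ∑ i, ∑ S ∈ powersetCard s univ with i ∈ firstBy r q S, a i :=
        sum_comm' (by simp)
    _ = ∑ i, n.choose s * (gammaR n s q (r i) * a i) := by
        refine sum_congr rfl fun i _ => ?_
        rw [sum_const, card_filter_mem_firstBy hqs, nsmul_eq_mul, gammaR]
        field_simp
    _ = n.choose s * ∑ j, gammaR n s q j * a (r.symm j) := by
        rw [← mul_sum, ← r.sum_comp fun j => gammaR n s q j * a (r.symm j)]
        simp only [Equiv.symm_apply_apply]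

theorem exists_isTopSubset_sum_sum_eq (hqs : q ≤ s) (hsn : s ≤ n) (a : Fin n → ℝ) :
    ∃ T : Finset (Fin n) → Finset (Fin n), (∀ S, #S = s → IsTopSubset a q S (T S)) ∧
      ∑ S ∈ powersetCard s univ, ∑ i ∈ T S, a i = n.choose s * orderedSum s q a := by
  set r := (Tuple.sort fun i => -a i).symm
  have antitone_rank (i k : Fin n) (hik : r i ≤ r k) : a k ≤ a i := by
    simpa [r] using Tuple.monotone_sort (fun i => -a i) hik
  exact ⟨firstBy r q, fun S hS => isTopSubset_firstBy r.injective antitone_rank (hqs.trans hS.ge),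
    sum_sum_firstBy hqs hsn r a⟩

variable {a : Fin n → ℝ} {Q : Finset (Fin n) → Finset (Fin n)}

theorem sum_sum_eq_choose_mul_orderedSum (hqs : q ≤ s) (hsn : s ≤ n)
    (hQ : ∀ S, #S = s → IsTopSubset a q S (Q S)) :
    ∑ S ∈ powersetCard s univ, ∑ i ∈ Q S, a i = n.choose s * orderedSum s q a := by
  obtain ⟨T, hT, hsum⟩ := exists_isTopSubset_sum_sum_eq hqs hsn a
  rw [← hsum]
  refine sum_congr rfl fun S hS => ?_
  rw [mem_powersetCard_univ] at hS
  exact (hQ S hS).sum_eq_sum (hT S hS)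

theorem sum_sum_le_choose_mul_orderedSum (hqs : q ≤ s) (hsn : s ≤ n)
    (hQ : ∀ S, #S = s → Q S ⊆ S ∧ #(Q S) = q) :
    ∑ S ∈ powersetCard s univ, ∑ i ∈ Q S, a i ≤ n.choose s * orderedSum s q a := by
  obtain ⟨T, hT, hsum⟩ := exists_isTopSubset_sum_sum_eq hqs hsn a
  rw [← hsum]
  refine sum_le_sum fun S hS => ?_
  rw [mem_powersetCard_univ] at hS
  exact (hT S hS).sum_le_sum (hQ S hS).1 (hQ S hS).2

theorem orderedSum_add_inv_choose_mul_sum_sum_le (hqs : q ≤ s) (hsn : s ≤ n) {b d : Fin n → ℝ}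
    (hQ : ∀ S, #S = s → IsTopSubset a q S (Q S)) (hd : ∀ i, a i + d i ≤ b i) :
    orderedSum s q a + (n.choose s : ℝ)⁻¹ * ∑ S ∈ powersetCard s univ, ∑ i ∈ Q S, d i ≤
      orderedSum s q b := by
  have choose_pos : (0 : ℝ) < n.choose s := by exact_mod_cast Nat.choose_pos hsn
  refine le_of_mul_le_mul_left ?_ choose_pos
  calc n.choose s * (orderedSum s q a +
        (n.choose s : ℝ)⁻¹ * ∑ S ∈ powersetCard s univ, ∑ i ∈ Q S, d i)
      = ∑ S ∈ powersetCard s univ, ∑ i ∈ Q S, (a i + d i) := by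
        rw [mul_add, mul_inv_cancel_left₀ choose_pos.ne',
          ← sum_sum_eq_choose_mul_orderedSum hqs hsn hQ]
        simp only [sum_add_distrib]
    _ ≤ ∑ S ∈ powersetCard s univ, ∑ i ∈ Q S, b i := by
        gcongr with S _ i _
        exact hd i
    _ ≤ n.choose s * orderedSum s q b :=
        sum_sum_le_choose_mul_orderedSum hqs hsn fun S hS => ⟨(hQ S hS).subset, (hQ S hS).card_eq⟩

theorem stmt_15_general (hq : 1 ≤ q) (hqs : q ≤ s) (hsn : s ≤ n)
    {E : Type*} [AddCommGroup E] [Module ℝ E] {L : Fin n → E → ℝ} {R : E → ℝ} {θ : E}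
    (hQ : ∀ S, #S = s → IsTopSubset (L · θ) q S (Q S))
    {φ : Fin n → Module.Dual ℝ E} (hφ : ∀ i θ', L i θ + φ i (θ' - θ) ≤ L i θ')
    {φR : Module.Dual ℝ E} (hφR : ∀ θ', R θ + φR (θ' - θ) ≤ R θ') (θ' : E) :
    (1 / (q : ℝ) * orderedSum s q (L · θ) + R θ) +
        ((n.choose s : ℝ)⁻¹ • ∑ S ∈ powersetCard s univ, ((1 / (q : ℝ)) • ∑ i ∈ Q S, φ i + φR))
          (θ' - θ) ≤
      1 / (q : ℝ) * orderedSum s q (L · θ') + R θ' := by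
  have one_div_q_pos : 0 < 1 / (q : ℝ) := by positivity
  have choose_ne_zero : (n.choose s : ℝ) ≠ 0 := by exact_mod_cast (Nat.choose_pos hsn).ne'
  have average_apply :
      ((n.choose s : ℝ)⁻¹ • ∑ S ∈ powersetCard s univ, ((1 / (q : ℝ)) • ∑ i ∈ Q S, φ i + φR))
          (θ' - θ) =
        1 / (q : ℝ) * ((n.choose s : ℝ)⁻¹ *
          ∑ S ∈ powersetCard s univ, ∑ i ∈ Q S, φ i (θ' - θ)) + φR (θ' - θ) := by
    simp only [LinearMap.smul_apply, LinearMap.add_apply, LinearMap.sum_apply, smul_eq_mul,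
      sum_add_distrib, ← mul_sum, sum_const, card_powersetCard, card_univ, Fintype.card_fin,
      nsmul_eq_mul]
    field_simp
  have loss_le := mul_le_mul_of_nonneg_left
    (orderedSum_add_inv_choose_mul_sum_sum_le hqs hsn hQ fun i => hφ i θ') one_div_q_pos.le
  rw [average_apply]
  linarith [hφR θ']

end OrderedSum

end

/-- Theorem 1. Let `Q S` be the set of the `q` indices `i ∈ S` with largest
loss `L i θ` (ties broken toward smaller index), let `g i` be a subgradient of `L i` at `θ` and
`gR` a subgradient of `R` at `θ`. Then
`g = C(n,s)⁻¹ ∑_{|S|=s} ((1/q) ∑_{i ∈ Q S} g i + gR)` is a subgradient at `θ` of the ordered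
empirical loss `L_q(θ') = (1/q) ∑_j γ_j b_{(j)}(θ') + R(θ')`. -/
theorem stmt_15 (n s q : ℕ) (hq : 1 ≤ q) (hqs : q ≤ s) (hsn : s ≤ n)
    (E : Type*) [NormedAddCommGroup E] [InnerProductSpace ℝ E]
    (L : Fin n → E → ℝ) (hL : ∀ i, ConvexOn ℝ Set.univ (L i))
    (R : E → ℝ) (hR : ConvexOn ℝ Set.univ R)
    (θ : E)
    (Q : Finset (Fin n) → Finset (Fin n))
    (hQ : ∀ S : Finset (Fin n), S.card = s →
      Q S ⊆ S ∧ (Q S).card = q ∧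
        ∀ i ∈ Q S, ∀ k ∈ S \ Q S, L k θ < L i θ ∨ (L k θ = L i θ ∧ i < k))
    (g : Fin n → E) (hg : ∀ i, ∀ θ' : E, L i θ + ⟪g i, θ' - θ⟫ ≤ L i θ')
    (gR : E) (hgR : ∀ θ' : E, R θ + ⟪gR, θ' - θ⟫ ≤ R θ') :
    ∀ θ' : E,
      ((1 / (q : ℝ)) * ∑ j : Fin n, gammaR n s q j * sortDesc (fun i => L i θ) j + R θ)
          + ⟪(Nat.choose n s : ℝ)⁻¹ •
              ∑ S ∈ Finset.powersetCard s (Finset.univ : Finset (Fin n)),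
                ((1 / (q : ℝ)) • ∑ i ∈ Q S, g i + gR), θ' - θ⟫
        ≤ (1 / (q : ℝ)) * ∑ j : Fin n, gammaR n s q j * sortDesc (fun i => L i θ') j + R θ' := by
  intro θ'
  have hTop (S : Finset (Fin n)) (hS : S.card = s) : IsTopSubset (L · θ) q S (Q S) :=
    ⟨(hQ S hS).1, (hQ S hS).2.1, fun i hi k hkS hk =>
      ((hQ S hS).2.2 i hi k (Finset.mem_sdiff.2 ⟨hkS, hk⟩)).elim le_of_lt fun h => h.1.le⟩
  simpa [orderedSum, inner_smul_left, inner_add_left, sum_inner] using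
    stmt_15_general hq hqs hsn hTop (φ := fun i => innerₗ E (g i)) hg (φR := innerₗ E gR) hgR θ'
end
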